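/- Let G be a finite simple chordal graph and let B be an induced complete bipartite subgraph of G with parts B_X = {x} and B_Y = {y_1,...,y_k}. Then for all 1 ≤ i < j ≤ k, the sets M_2(y_i) and M_2(y_j) are disjoint and nonadjacent. -/

import Mathlib

open SimpleGraph

/-- `N₁(S)`: the set of vertices at distance exactly 1 from the vertex set `S`. -/
def nOne {V : Type*} (G : SimpleGraph V) (S : Set V) : Set V :=
  {v | v ∉ S ∧ ∃ s ∈ S, G.Adj v s}

/-- `N₂(S)`: the set of vertices at distance exactly 2 from the vertex set `S`. -/
def nTwo {V : Type*} (G : SimpleGraph V) (S : Set V) : Set V :=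
  {v | v ∉ S ∧ (∀ s ∈ S, ¬ G.Adj v s) ∧ ∃ u, G.Adj v u ∧ ∃ s ∈ S, G.Adj u s}

/-- A graph is chordal if every induced cycle is a triangle, i.e. it has no
induced cycle of length at least 4. -/
def IsChordal {V : Type*} (G : SimpleGraph V) : Prop :=
  ∀ n : ℕ, 4 ≤ n → ∀ s : Set V, IsEmpty (G.induce s ≃g cycleGraph n)

/-- A set of vertices is independent if its elements are pairwise nonadjacent. -/
def IsIndepSet {V : Type*} (G : SimpleGraph V) (S : Set V) : Prop :=
  S.Pairwise fun a b => ¬ G.Adj a b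

/-- `B` is an induced complete bipartite subgraph of `G` with parts `B_X = {x}` and
`B_Y = Y`: `Y` is a nonempty independent set not containing `x`, and `x` is adjacent
to every vertex of `Y`. -/
def IsInducedStar {V : Type*} (G : SimpleGraph V) (x : V) (Y : Set V) : Prop :=
  Y.Nonempty ∧ x ∉ Y ∧ (∀ y ∈ Y, G.Adj x y) ∧ ∀ y₁ ∈ Y, ∀ y₂ ∈ Y, ¬ G.Adj y₁ y₂

/-- `M₁(y) = N₁(y) ∩ N₂(B_X)` where `B_X = {x}`. -/
def M1y {V : Type*} (G : SimpleGraph V) (x : V) (y : V) : Set V :=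
  nOne G {y} ∩ nTwo G {x}

/-- `M₂(y) = N₁(M₁(y)) ∩ N₂(B_Y)` where `B_Y = Y`. -/
def M2y {V : Type*} (G : SimpleGraph V) (x : V) (Y : Set V) (y : V) : Set V :=
  nOne G (M1y G x y) ∩ nTwo G Y

/-! In a chordal graph, a component of `G - N[x]` attaches to the neighbours of `x` in a clique: a
shortest path between two nonadjacent attached neighbours, with all interior vertices in the
component, would close up through `x` to an induced cycle of length at least 4. Now `yᵢ` is
attached to the component of each vertex of `M₂(yᵢ)`, and the `yᵢ` are pairwise nonadjacent, so no
component of `G - N[x]` can meet both `M₂(yᵢ)` and `M₂(yⱼ)`. -/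

section

variable {V : Type*} {G : SimpleGraph V} {x y z : V}

theorem IsChordal.not_cycleGraph_isIndContained (hG : IsChordal G) {n : ℕ} (hn : 4 ≤ n) :
    ¬ cycleGraph n ⊴ G := by
  rw [isIndContained_iff_exists_iso_induce]
  rintro ⟨s, ⟨e⟩⟩
  exact (hG n hn s).false e.symm

theorem dist_getVert_of_length_eq_dist {p : G.Walk y z} (hp : p.length = G.dist y z) {i : ℕ}
    (hi : i ≤ p.length) : G.dist y (p.getVert i) = i := by
  have h_left : G.dist y (p.getVert i) ≤ i := by
    simpa only [Walk.take_length, min_eq_left hi] using dist_le (p.take i)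
  have h_right : G.dist (p.getVert i) z ≤ p.length - i := by
    simpa only [Walk.drop_length] using dist_le (p.drop i)
  have h_triangle : G.dist y z ≤ G.dist y (p.getVert i) + G.dist (p.getVert i) z :=
    (p.take i).reachable.dist_triangle_left z
  lia

theorem exists_pathGraph_embedding_of_reachable (h : G.Reachable y z) :
    ∃ f : pathGraph (G.dist y z + 1) ↪g G, f 0 = y ∧ f (Fin.last _) = z := by
  obtain ⟨p, hp⟩ := h.exists_walk_length_eq_dist
  have dist_getVert (i : Fin (G.dist y z + 1)) : G.dist y (p.getVert i) = i :=
    dist_getVert_of_length_eq_dist hp (by lia)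
  have getVert_injective : Function.Injective fun i : Fin (G.dist y z + 1) => p.getVert i :=
    fun i j hij => Fin.ext <| by simpa only [dist_getVert] using congrArg (G.dist y) hij
  refine ⟨⟨⟨_, getVert_injective⟩, fun {i j} => ?_⟩, p.getVert_zero, ?_⟩
  · change G.Adj (p.getVert i) (p.getVert j) ↔ _
    rw [pathGraph_adj]
    constructor
    · intro hij
      have hne : (i : ℕ) ≠ j := fun h => hij.ne (by rw [h])
      have hdist := hij.diff_dist_adj (u := y)
      rw [dist_getVert, dist_getVert] at hdist
      lia
    · rintro (hij | hij)
      · exact hij ▸ p.adj_getVert_succ (by lia)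
      · exact hij ▸ (p.adj_getVert_succ (by lia)).symm
  · simp [← hp]

theorem cycleGraph_adj_zero_succ {n : ℕ} {i : Fin (n + 1)} :
    (cycleGraph (n + 2)).Adj 0 i.succ ↔ i = 0 ∨ i = Fin.last n := by
  rw [cycleGraph_adj', Fin.coe_sub_iff_lt.2 i.succ_pos, Fin.sub_val_of_le i.succ_pos.le,
    Fin.ext_iff, Fin.ext_iff, Fin.val_succ, Fin.val_zero, Fin.val_zero, Fin.val_last]
  lia

theorem cycleGraph_adj_succ_succ {n : ℕ} {i j : Fin (n + 1)} :
    (cycleGraph (n + 2)).Adj i.succ j.succ ↔ (pathGraph (n + 1)).Adj i j := by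
  wlog hij : i ≤ j generalizing i j
  · rw [adj_comm, this (le_of_not_ge hij), adj_comm]
  obtain rfl | hlt := hij.eq_or_lt
  · simp
  · have hsucc : i.succ < j.succ := Fin.succ_lt_succ_iff.2 hlt
    rw [cycleGraph_adj', pathGraph_adj, Fin.coe_sub_iff_lt.2 hsucc, Fin.sub_val_of_le hsucc.le,
      Fin.val_succ, Fin.val_succ]
    lia

theorem cycleGraph_isIndContained_of_pathGraph_embedding {n : ℕ} (f : pathGraph (n + 1) ↪g G)
    (hx : x ∉ Set.range f) (hadj : ∀ i, G.Adj x (f i) ↔ i = 0 ∨ i = Fin.last n) :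
    cycleGraph (n + 2) ⊴ G := by
  refine ⟨⟨⟨Fin.cons x f, Fin.cons_injective_of_injective hx f.injective⟩, fun {i j} => ?_⟩⟩
  change G.Adj (Fin.cons (α := fun _ => V) x f i) (Fin.cons (α := fun _ => V) x f j) ↔ _
  cases i using Fin.cases with
  | zero =>
    cases j using Fin.cases with
    | zero => simp
    | succ j => simp [hadj, cycleGraph_adj_zero_succ]
  | succ i =>
    cases j using Fin.cases with
    | zero => simp [adj_comm _ _ x, adj_comm _ _ (0 : Fin _), hadj, cycleGraph_adj_zero_succ]
    | succ j => simp [cycleGraph_adj_succ_succ]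

theorem IsChordal.adj_of_reachable_induce (hG : IsChordal G) (hxy : G.Adj x y) (hxz : G.Adj x z)
    (hyz : y ≠ z) {S : Set V} (hxS : x ∉ S) (hS : S ∩ G.neighborSet x ⊆ {y, z})
    (hy : y ∈ S) (hz : z ∈ S) (h : (G.induce S).Reachable ⟨y, hy⟩ ⟨z, hz⟩) : G.Adj y z := by
  by_contra hnadj
  have hlen := h.one_lt_dist_of_ne_of_not_adj (by simpa using hyz) hnadj
  obtain ⟨f, hf_zero, hf_last⟩ := exists_pathGraph_embedding_of_reachable h
  refine hG.not_cycleGraph_isIndContained (by lia) <|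
    cycleGraph_isIndContained_of_pathGraph_embedding (x := x) ((Embedding.induce S).comp f) ?_ ?_
  · rintro ⟨i, rfl⟩
    exact hxS (f i).2
  · intro i
    change G.Adj x (f i) ↔ _
    rw [← f.injective.eq_iff, ← f.injective.eq_iff (b := Fin.last _), hf_zero, hf_last]
    constructor
    · intro hi
      simpa [Subtype.ext_iff] using hS ⟨(f i).2, hi⟩
    · rintro (hi | hi)
      · simpa only [hi] using hxy
      · simpa only [hi] using hxz

theorem IsChordal.adj_of_reachable_compl (hG : IsChordal G) (hxy : G.Adj x y) (hxz : G.Adj x z)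
    (hyz : y ≠ z) {u v : Gᶜ.neighborSet x} (hyu : G.Adj y u) (hzv : G.Adj z v)
    (huv : (G.induce (Gᶜ.neighborSet x)).Reachable u v) : G.Adj y z := by
  let S : Set V := insert y (insert z (Gᶜ.neighborSet x))
  have hsub : Gᶜ.neighborSet x ⊆ S := fun w hw => .inr (.inr hw)
  have hyS : y ∈ S := .inl rfl
  have hzS : z ∈ S := .inr (.inl rfl)
  have hxS : x ∉ S := by simp [S, hxy.ne, hxz.ne]
  have hS : S ∩ G.neighborSet x ⊆ {y, z} := by
    rintro w ⟨rfl | rfl | hw, hxw⟩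
    · simp
    · simp
    · exact absurd hxw hw.2
  have hy_reach : (G.induce S).Reachable ⟨y, hyS⟩ (Set.inclusion hsub u) := Adj.reachable hyu
  have huv_reach : (G.induce S).Reachable (Set.inclusion hsub u) (Set.inclusion hsub v) :=
    huv.map (G.induceHomOfLE hsub).toHom
  have hz_reach : (G.induce S).Reachable (Set.inclusion hsub v) ⟨z, hzS⟩ :=
    Adj.reachable hzv.symm
  exact hG.adj_of_reachable_induce hxy hxz hyz hxS hS hyS hzS
    (hy_reach.trans (huv_reach.trans hz_reach))

theorem M1y_subset : M1y G x y ⊆ G.neighborSet y ∩ Gᶜ.neighborSet x := by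
  rintro m ⟨⟨-, _, rfl, hmy⟩, hmx, hmx', -⟩
  exact ⟨hmy.symm, Ne.symm hmx, fun hxm => hmx' x rfl hxm.symm⟩

variable {Y : Set V}

theorem IsChordal.M2y_subset (hG : IsChordal G) (hxy : G.Adj x y) (hy : y ∈ Y) :
    M2y G x Y y ⊆ Gᶜ.neighborSet x := by
  rintro a ⟨⟨-, m, hm, ham⟩, haY, haY', -⟩
  obtain ⟨hym, hxm⟩ := M1y_subset hm
  have hay : ¬ G.Adj a y := haY' y hy
  refine ⟨fun hxa => hay (hxa ▸ hxy), fun hxa => hay ?_⟩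
  exact hG.adj_of_reachable_compl (u := ⟨m, hxm⟩) (v := ⟨m, hxm⟩) hxa hxy
    (fun h => haY (h ▸ hy)) ham hym .rfl

theorem IsChordal.exists_adj_reachable_of_mem_M2y (hG : IsChordal G) (hxy : G.Adj x y)
    (hy : y ∈ Y) {a : V} (ha : a ∈ M2y G x Y y) :
    ∃ u : Gᶜ.neighborSet x, G.Adj y u ∧
      (G.induce (Gᶜ.neighborSet x)).Reachable u ⟨a, hG.M2y_subset hxy hy ha⟩ := by
  obtain ⟨⟨-, m, hm, ham⟩, -⟩ := ha
  obtain ⟨hym, hxm⟩ := M1y_subset hm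
  exact ⟨⟨m, hxm⟩, hym, Adj.reachable ham.symm⟩

end

/-- For distinct `yᵢ, yⱼ ∈ B_Y`, the sets `M₂(yᵢ)` and `M₂(yⱼ)` are disjoint
and nonadjacent. -/
theorem stmt4 {V : Type*} (G : SimpleGraph V) (hG : IsChordal G)
    (x : V) (Y : Set V) (hB : IsInducedStar G x Y)
    (yi yj : V) (hyi : yi ∈ Y) (hyj : yj ∈ Y) (hne : yi ≠ yj) :
    Disjoint (M2y G x Y yi) (M2y G x Y yj) ∧
      ∀ a ∈ M2y G x Y yi, ∀ b ∈ M2y G x Y yj, ¬ G.Adj a b := by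
  obtain ⟨-, -, hxY, hindep⟩ := hB
  have separated {a b : V} (ha : a ∈ M2y G x Y yi) (hb : b ∈ M2y G x Y yj) :
      ¬ (G.induce (Gᶜ.neighborSet x)).Reachable
        ⟨a, hG.M2y_subset (hxY yi hyi) hyi ha⟩ ⟨b, hG.M2y_subset (hxY yj hyj) hyj hb⟩ := by
    intro hab
    obtain ⟨u, hu, hua⟩ := hG.exists_adj_reachable_of_mem_M2y (hxY yi hyi) hyi ha
    obtain ⟨v, hv, hvb⟩ := hG.exists_adj_reachable_of_mem_M2y (hxY yj hyj) hyj hb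
    exact hindep yi hyi yj hyj <| hG.adj_of_reachable_compl (hxY yi hyi) (hxY yj hyj) hne hu hv <|
      hua.trans <| hab.trans hvb.symm
  exact ⟨Set.disjoint_left.2 fun a ha hb => separated ha hb .rfl,
    fun a ha b hb hab => separated ha hb (Adj.reachable hab)⟩
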